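/- The number of semistandard Young tableaux of shape λ with entries in {1,...,m} equals ∏_{s∈λ} (m + c(s))/h(s), where c(s) = j - i is the content and h(s) = λ_i + λ^t_j - i - j + 1 is the hook length of the box s at position (i,j); equivalently, s_λ(1,1,...,1) (m ones) = ∏_{s∈λ} (m + c(s))/h(s). -/

import Mathlib

open Finset

/-!
Removing the entries equal to `n` from a tableau with entries in `{0, …, n}` leaves a tableau whose
shape is obtained by deleting a horizontal strip. In terms of the beta-numbers
`b_p = μ_{n-p} + p`, the remaining shapes are exactly those whose beta-numbers interlace the old
ones, `b_p ≤ a_p < b_{p+1}`. The determinant of the binomial coefficients `b_p.choose q` satisfies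
the same recursion, because `∑ x ∈ [b, b'), x.choose q = b'.choose (q + 1) - b.choose (q + 1)`;
hence it counts the tableaux, and up to factorials it is the Vandermonde determinant of the
beta-numbers.

The hook lengths of a row are the differences between its beta-number `b` and the gaps below `b`.
Beta-numbers and gaps partition `{0, …, b - 1}`, so the hook lengths of the row multiplied by the
differences of `b` with the smaller beta-numbers give `b!`. This turns the Vandermonde product into
the hook content product.
-/

section ChooseDeterminant

variable {n : ℕ}

/-- The matrix `(b i).choose j`: the Vandermonde matrix of the nodes `b i` with the monomials
`x ^ j` replaced by the binomial polynomials `x.choose j`. -/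
def chooseMatrix (R : Type*) [NatCast R] (b : Fin n → ℕ) : Matrix (Fin n) (Fin n) R :=
  Matrix.of fun i j => ((b i).choose j : R)

theorem sum_Ico_choose {R : Type*} [AddCommGroupWithOne R] {a b : ℕ} (hab : a ≤ b) (k : ℕ) :
    ∑ x ∈ Ico a b, (x.choose k : R) = b.choose (k + 1) - a.choose (k + 1) := by
  rw [← sum_Ico_sub (fun x => (x.choose (k + 1) : R)) hab]
  refine sum_congr rfl fun x _ => ?_
  rw [Nat.choose_succ_succ, Nat.cast_add, add_sub_cancel_right]

variable {R : Type*} [CommRing R]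

theorem det_chooseMatrix_eq_det_sub (b : Fin (n + 1) → ℕ) :
    (chooseMatrix R b).det = (Matrix.of fun i j : Fin n =>
      ((b i.succ).choose (j + 1) - (b i.castSucc).choose (j + 1) : R)).det := by
  let rowDiff : Matrix (Fin (n + 1)) (Fin (n + 1)) R := Matrix.of fun i j =>
    Fin.cases ((b 0).choose j : R)
      (fun i : Fin n => ((b i.succ).choose j : R) - (b i.castSucc).choose j) i
  have h_rowDiff : (chooseMatrix R b).det = rowDiff.det :=
    Matrix.det_eq_of_forall_row_eq_smul_add_pred (fun _ => 1)
      (fun j => by simp [chooseMatrix, rowDiff]) (fun i j => by simp [chooseMatrix, rowDiff])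
  rw [h_rowDiff, Matrix.det_succ_column_zero, Fin.sum_univ_succ]
  simp [rowDiff, Matrix.submatrix]

theorem det_chooseMatrix_succ {b : Fin (n + 1) → ℕ} (hb : Monotone b) :
    (chooseMatrix R b).det =
      ∑ a ∈ Fintype.piFinset fun i : Fin n => Ico (b i.castSucc) (b i.succ),
        (chooseMatrix R a).det := by
  have h_expand := (Matrix.detRowAlternating (R := R) (n := Fin n)).toMultilinearMap.map_sum_finset
    (fun _ x j => (x.choose j : R)) (fun i => Ico (b i.castSucc) (b i.succ))
  refine (det_chooseMatrix_eq_det_sub b).trans (Eq.trans (congrArg Matrix.det ?_) h_expand)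
  ext i j
  simp [sum_Ico_choose (hb i.castSucc_le_succ)]

theorem prod_factorial_mul_det_chooseMatrix [IsDomain R] (b : Fin n → ℕ) :
    (∏ i : Fin n, ((i : ℕ).factorial : R)) * (chooseMatrix R b).det =
      ∏ p, ∏ q ∈ Iio p, ((b p : R) - b q) :=
  calc
    _ = (Matrix.of fun i j : Fin n => (descPochhammer R j).eval (b i : R)).det := by
      rw [← Matrix.det_mul_row]
      congr 1
      ext i j
      simp [chooseMatrix, descPochhammer_eval_eq_descFactorial,
        Nat.descFactorial_eq_factorial_mul_choose]
    _ = (Matrix.vandermonde fun i => (b i : R)).det :=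
      (Matrix.det_eval_matrixOfPolynomials_eq_det_vandermonde _ _
        (fun i => descPochhammer_natDegree R i) (fun i => monic_descPochhammer R i)).symm
    _ = ∏ p, ∏ q ∈ Iio p, ((b p : R) - b q) := by
      rw [Matrix.det_vandermonde]
      exact prod_comm' (by simp)

end ChooseDeterminant

section Diagram

theorem rowLen_injective : Function.Injective YoungDiagram.rowLen := by
  intro μ ν h
  ext ⟨i, j⟩
  simp only [YoungDiagram.mem_cells, YoungDiagram.mem_iff_lt_rowLen, h]

theorem rowLen_eq_zero_iff {μ : YoungDiagram} {i : ℕ} : μ.rowLen i = 0 ↔ μ.colLen 0 ≤ i := by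
  rw [← not_lt, ← YoungDiagram.mem_iff_lt_colLen, YoungDiagram.mem_iff_lt_rowLen,
    Nat.pos_iff_ne_zero, not_not]

theorem colLen_le_of_colLen_zero_le {μ : YoungDiagram} {n : ℕ} (hμ : μ.colLen 0 ≤ n) (j : ℕ) :
    μ.colLen j ≤ n :=
  (μ.colLen_anti 0 j j.zero_le).trans hμ

theorem prod_cells_eq_prod_rows {M : Type*} [CommMonoid M] {μ : YoungDiagram} {n : ℕ}
    (hμ : μ.colLen 0 ≤ n) (f : ℕ × ℕ → M) :
    ∏ c ∈ μ.cells, f c = ∏ i : Fin n, ∏ j ∈ range (μ.rowLen i), f (i, j) := by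
  rw [← prod_range fun i => ∏ j ∈ range (μ.rowLen i), f (i, j)]
  refine prod_finset_product _ _ _ fun ⟨i, j⟩ => ?_
  simp only [YoungDiagram.mem_cells, mem_range, ← YoungDiagram.mem_iff_lt_rowLen,
    iff_and_self]
  exact fun h => (YoungDiagram.mem_iff_lt_colLen.1 h).trans_le (colLen_le_of_colLen_zero_le hμ j)

/-- The Young diagram with row lengths `lam 0 ≥ lam 1 ≥ ⋯`, where zero rows are allowed. -/
def diagramOfAntitone {d : ℕ} (lam : Fin d → ℕ) (hlam : Antitone lam) : YoungDiagram :=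
  YoungDiagram.ofRowLens (List.ofFn lam) hlam.sortedGE_ofFn

section diagramOfAntitone

variable {d : ℕ} {lam : Fin d → ℕ} {hlam : Antitone lam}

theorem mem_diagramOfAntitone {c : ℕ × ℕ} :
    c ∈ diagramOfAntitone lam hlam ↔ ∃ h : c.1 < d, c.2 < lam ⟨c.1, h⟩ := by
  simp [diagramOfAntitone, YoungDiagram.mem_ofRowLens]

theorem rowLen_diagramOfAntitone (i : Fin d) : (diagramOfAntitone lam hlam).rowLen i = lam i := by
  refine eq_of_forall_lt_iff fun j => ?_
  simp [← YoungDiagram.mem_iff_lt_rowLen, mem_diagramOfAntitone]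

theorem colLen_diagramOfAntitone (j : ℕ) :
    (diagramOfAntitone lam hlam).colLen j = (univ.filter fun i => j < lam i).card := by
  rw [YoungDiagram.colLen_eq_card]
  symm
  refine card_bij (fun i _ => ((i : ℕ), j)) ?_ ?_ ?_
  · simp [YoungDiagram.mem_col_iff, mem_diagramOfAntitone]
  · simp [Fin.ext_iff]
  · rintro ⟨i, j'⟩ h
    obtain ⟨h_mem, rfl⟩ := YoungDiagram.mem_col_iff.1 h
    obtain ⟨hi, hj⟩ := mem_diagramOfAntitone.1 h_mem
    exact ⟨⟨i, hi⟩, by simpa using hj, rfl⟩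

theorem colLen_zero_diagramOfAntitone_le : (diagramOfAntitone lam hlam).colLen 0 ≤ d := by
  rw [colLen_diagramOfAntitone]
  exact (card_filter_le _ _).trans_eq (card_fin d)

end diagramOfAntitone

end Diagram

section StrictMono

variable {n : ℕ} {a : Fin n → ℕ}

theorem add_sub_le_of_strictMono (ha : StrictMono a) {p q : Fin n} (hpq : p ≤ q) :
    a p + (q - p : ℕ) ≤ a q := by
  have h_card := card_le_card_of_injOn (s := Ico p q) (t := Ico (a p) (a q)) a
    (fun x hx => by simp_all [ha.le_iff_le, ha.lt_iff_lt]) ha.injective.injOn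
  have := ha.monotone hpq
  simp only [Fin.card_Ico, Nat.card_Ico] at h_card
  omega

theorem val_le_of_strictMono (ha : StrictMono a) (p : Fin n) : (p : ℕ) ≤ a p := by
  simpa using card_le_card_of_injOn (s := Iio p) (t := range (a p)) a
    (fun x hx => by simp_all [ha.lt_iff_lt]) ha.injective.injOn

end StrictMono

section BetaNumbers

/-- The beta-numbers `μ_{n-1-p} + p` of a Young diagram with at most `n` rows (the parts of
`μ + δ`), listed in increasing order, that is, from the bottom row to the top one. -/
def betaNumber (μ : YoungDiagram) (n : ℕ) (p : Fin n) : ℕ :=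
  μ.rowLen p.rev + p

/-- The numbers that are not beta-numbers, listed in increasing order: `n + j - μ'_j`, where `μ'`
is the conjugate of `μ`. -/
def betaGap (μ : YoungDiagram) (n j : ℕ) : ℕ :=
  n + j - μ.colLen j

variable {μ : YoungDiagram} {n : ℕ}

theorem betaNumber_strictMono (μ : YoungDiagram) (n : ℕ) : StrictMono (betaNumber μ n) :=
  fun _ _ h => add_lt_add_of_le_of_lt (μ.rowLen_anti _ _ (Fin.rev_anti h.le)) h

theorem betaNumber_injOn : Set.InjOn (betaNumber · n) {μ | μ.colLen 0 ≤ n} := by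
  intro μ hμ ν hν h
  refine rowLen_injective (funext fun i => ?_)
  rcases lt_or_ge i n with hi | hi
  · simpa [betaNumber] using congrFun h (Fin.rev ⟨i, hi⟩)
  · rw [rowLen_eq_zero_iff.2 (hμ.trans hi), rowLen_eq_zero_iff.2 (hν.trans hi)]

theorem exists_betaNumber_eq {a : Fin n → ℕ} (ha : StrictMono a) :
    ∃ μ : YoungDiagram, μ.colLen 0 ≤ n ∧ betaNumber μ n = a := by
  have h_anti : Antitone fun i : Fin n => a i.rev - i.rev := fun i k hik => by
    have := add_sub_le_of_strictMono ha (Fin.rev_anti hik)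
    have : (k.rev : ℕ) ≤ i.rev := Fin.rev_anti hik
    dsimp only
    omega
  refine ⟨diagramOfAntitone _ h_anti, colLen_zero_diagramOfAntitone_le, funext fun p => ?_⟩
  rw [betaNumber, rowLen_diagramOfAntitone, Fin.rev_rev,
    Nat.sub_add_cancel (val_le_of_strictMono ha p)]

theorem betaGap_strictMono (hμ : μ.colLen 0 ≤ n) : StrictMono (betaGap μ n) := fun j k hjk => by
  have := μ.colLen_anti j k hjk.le
  have := colLen_le_of_colLen_zero_le hμ j
  unfold betaGap
  omega

theorem betaNumber_ne_betaGap (hμ : μ.colLen 0 ≤ n) (p : Fin n) (j : ℕ) :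
    betaNumber μ n p ≠ betaGap μ n j := by
  have h_mem : (p.rev : ℕ) < μ.colLen j ↔ j < μ.rowLen p.rev :=
    YoungDiagram.mem_iff_lt_colLen.symm.trans YoungDiagram.mem_iff_lt_rowLen
  have := colLen_le_of_colLen_zero_le hμ j
  rw [Fin.val_rev] at h_mem
  unfold betaNumber betaGap
  rw [Fin.val_rev]
  omega

theorem betaGap_lt_betaNumber {p : Fin n} {j : ℕ} (hj : j < μ.rowLen p.rev) :
    betaGap μ n j < betaNumber μ n p := by
  have h_mem : (p.rev : ℕ) < μ.colLen j :=
    YoungDiagram.mem_iff_lt_colLen.1 (YoungDiagram.mem_iff_lt_rowLen.2 hj)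
  rw [Fin.val_rev] at h_mem
  unfold betaNumber betaGap
  omega

theorem disjoint_image_betaNumber_image_betaGap (hμ : μ.colLen 0 ≤ n) (p : Fin n) :
    Disjoint ((Iio p).image (betaNumber μ n)) ((range (μ.rowLen p.rev)).image (betaGap μ n)) := by
  simp only [disjoint_left, mem_image]
  rintro _ ⟨q, -, rfl⟩ ⟨j, -, h⟩
  exact betaNumber_ne_betaGap hμ q j h.symm

theorem image_betaNumber_union_image_betaGap (hμ : μ.colLen 0 ≤ n) (p : Fin n) :
    (Iio p).image (betaNumber μ n) ∪ (range (μ.rowLen p.rev)).image (betaGap μ n) =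
      range (betaNumber μ n p) := by
  refine eq_of_subset_of_card_le (union_subset ?_ ?_) ?_
  · simp only [image_subset_iff, mem_Iio, mem_range]
    exact fun q hq => betaNumber_strictMono μ n hq
  · simp only [image_subset_iff, mem_range]
    exact fun j hj => betaGap_lt_betaNumber hj
  · rw [card_union_of_disjoint (disjoint_image_betaNumber_image_betaGap hμ p),
      card_image_of_injective _ (betaNumber_strictMono μ n).injective,
      card_image_of_injective _ (betaGap_strictMono hμ).injective]
    simp [betaNumber, add_comm]

end BetaNumbers

section HookLengths

/-- The hook length `μ_i + μ'_j - i - j - 1` of the cell `(i, j)`, in zero-based coordinates; the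
truncated subtractions are exact on the cells of `μ`. -/
def hookLength (μ : YoungDiagram) (c : ℕ × ℕ) : ℕ :=
  μ.rowLen c.1 + μ.colLen c.2 - c.1 - c.2 - 1

variable {μ : YoungDiagram} {n : ℕ}

theorem hookLength_pos {c : ℕ × ℕ} (hc : c ∈ μ) : 0 < hookLength μ c := by
  have h_row := YoungDiagram.mem_iff_lt_rowLen.1 hc
  have h_col := YoungDiagram.mem_iff_lt_colLen.1 hc
  unfold hookLength
  omega

theorem hookLength_eq_betaNumber_sub_betaGap (hμ : μ.colLen 0 ≤ n) (p : Fin n) (j : ℕ) :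
    hookLength μ (p.rev, j) = betaNumber μ n p - betaGap μ n j := by
  have := colLen_le_of_colLen_zero_le hμ j
  unfold hookLength betaNumber betaGap
  dsimp only
  have := p.val_rev
  omega

theorem prod_hookLength_mul_prod_betaNumber_sub (hμ : μ.colLen 0 ≤ n) (p : Fin n) :
    (∏ j ∈ range (μ.rowLen p.rev), hookLength μ (p.rev, j)) *
      ∏ q ∈ Iio p, (betaNumber μ n p - betaNumber μ n q) = (betaNumber μ n p).factorial := by
  simp only [hookLength_eq_betaNumber_sub_betaGap hμ]
  rw [← Nat.descFactorial_self, Nat.descFactorial_eq_prod_range,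
    ← image_betaNumber_union_image_betaGap hμ p,
    prod_union (disjoint_image_betaNumber_image_betaGap hμ p),
    prod_image (betaNumber_strictMono μ n).injective.injOn,
    prod_image (betaGap_strictMono hμ).injective.injOn, mul_comm]

theorem factorial_mul_prod_content (μ : YoungDiagram) (p : Fin n) :
    ((p : ℕ).factorial : ℚ) * ∏ j ∈ range (μ.rowLen p.rev), ((n : ℚ) + j - (p.rev : ℕ)) =
      (betaNumber μ n p).factorial := by
  rw [betaNumber, add_comm, ← Nat.factorial_mul_ascFactorial, Nat.ascFactorial_eq_prod_range]
  push_cast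
  congr! 2 with j
  rw [Fin.val_rev, Nat.cast_sub p.is_lt]
  push_cast
  ring

theorem factorial_mul_prod_content_div_hookLength (hμ : μ.colLen 0 ≤ n) (p : Fin n) :
    ((p : ℕ).factorial : ℚ) * ∏ j ∈ range (μ.rowLen p.rev),
        ((n : ℚ) + j - (p.rev : ℕ)) / hookLength μ (p.rev, j) =
      ∏ q ∈ Iio p, ((betaNumber μ n p : ℚ) - betaNumber μ n q) := by
  have h_hook : ∏ j ∈ range (μ.rowLen p.rev), (hookLength μ (p.rev, j) : ℚ) ≠ 0 :=
    prod_ne_zero_iff.2 fun j hj => Nat.cast_ne_zero.2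
      (hookLength_pos (YoungDiagram.mem_iff_lt_rowLen.2 (mem_range.1 hj))).ne'
  rw [prod_div_distrib, ← mul_div_assoc, factorial_mul_prod_content, div_eq_iff h_hook, mul_comm,
    ← prod_hookLength_mul_prod_betaNumber_sub hμ]
  push_cast
  congr 1
  refine prod_congr rfl fun q hq => Nat.cast_sub ?_
  exact (betaNumber_strictMono μ n).monotone (mem_Iio.1 hq).le

theorem det_chooseMatrix_betaNumber (hμ : μ.colLen 0 ≤ n) :
    (chooseMatrix ℚ (betaNumber μ n)).det =
      ∏ c ∈ μ.cells, ((n : ℚ) + c.2 - c.1) / hookLength μ c := by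
  have h_factorial : ∏ p : Fin n, ((p : ℕ).factorial : ℚ) ≠ 0 :=
    prod_ne_zero_iff.2 fun p _ => Nat.cast_ne_zero.2 (Nat.factorial_ne_zero p)
  apply mul_left_cancel₀ h_factorial
  rw [prod_factorial_mul_det_chooseMatrix, prod_cells_eq_prod_rows hμ,
    ← Equiv.prod_comp Fin.revPerm fun i : Fin n => ∏ j ∈ range (μ.rowLen i), _, ← prod_mul_distrib]
  exact prod_congr rfl fun p _ => (factorial_mul_prod_content_div_hookLength hμ p).symm

end HookLengths

section HorizontalStrips

/-- `μ / ν` is a horizontal strip: no two of its cells lie in the same column. -/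
def IsHorizontalStrip (ν μ : YoungDiagram) : Prop :=
  ν ≤ μ ∧ ∀ ⦃i j : ℕ⦄, (i + 1, j) ∈ μ → (i, j) ∈ ν

/-- The diagrams `ν` with at most `n` rows such that `μ / ν` is a horizontal strip: the shapes into
which the branching rule splits the tableaux of shape `μ` with entries less than `n + 1`. -/
def horizontalStrips (μ : YoungDiagram) (n : ℕ) : Set YoungDiagram :=
  {ν | IsHorizontalStrip ν μ ∧ ν.colLen 0 ≤ n}

variable {μ ν : YoungDiagram} {n : ℕ}

theorem isHorizontalStrip_iff_rowLen :
    IsHorizontalStrip ν μ ↔ ∀ i, ν.rowLen i ∈ Set.Icc (μ.rowLen (i + 1)) (μ.rowLen i) := by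
  simp only [IsHorizontalStrip, ← YoungDiagram.cells_subset_iff, subset_iff, Prod.forall,
    YoungDiagram.mem_cells, YoungDiagram.mem_iff_lt_rowLen, Set.mem_Icc, forall_and,
    ← forall_lt_iff_le, and_comm]

theorem isHorizontalStrip_iff_betaNumber (hμ : μ.colLen 0 ≤ n + 1) (hν : ν.colLen 0 ≤ n) :
    IsHorizontalStrip ν μ ↔ ∀ p : Fin n, betaNumber ν n p ∈
      Ico (betaNumber μ (n + 1) p.castSucc) (betaNumber μ (n + 1) p.succ) := by
  have h_large : ∀ i, n ≤ i → ν.rowLen i ∈ Set.Icc (μ.rowLen (i + 1)) (μ.rowLen i) := fun i hi => by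
    simp [rowLen_eq_zero_iff.2 (hν.trans hi),
      rowLen_eq_zero_iff.2 (hμ.trans (Nat.succ_le_succ hi))]
  have h_small : IsHorizontalStrip ν μ ↔
      ∀ i : Fin n, ν.rowLen i ∈ Set.Icc (μ.rowLen (i + 1)) (μ.rowLen i) := by
    rw [isHorizontalStrip_iff_rowLen]
    exact ⟨fun h i => h i, fun h i => (lt_or_ge i n).elim (fun hi => h ⟨i, hi⟩) (h_large i)⟩
  rw [h_small, ← Fin.revPerm.forall_congr_right]
  refine forall_congr' fun p => ?_
  simp only [betaNumber, Fin.revPerm_apply, Fin.rev_castSucc, Fin.rev_succ, Fin.val_succ,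
    Fin.val_castSucc, Set.mem_Icc, mem_Ico]
  omega

theorem bijOn_betaNumber_horizontalStrips (hμ : μ.colLen 0 ≤ n + 1) :
    Set.BijOn (betaNumber · n) (horizontalStrips μ n)
      (Fintype.piFinset fun p : Fin n =>
        Ico (betaNumber μ (n + 1) p.castSucc) (betaNumber μ (n + 1) p.succ)) := by
  refine ⟨fun ν hν => ?_, betaNumber_injOn.mono fun ν hν => hν.2, fun a ha => ?_⟩
  · exact Fintype.mem_piFinset.2 ((isHorizontalStrip_iff_betaNumber hμ hν.2).1 hν.1)
  · have h_mem := Fintype.mem_piFinset.1 ha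
    have h_strictMono : StrictMono a := fun p q hpq =>
      calc
        a p < betaNumber μ (n + 1) p.succ := (mem_Ico.1 (h_mem p)).2
        _ ≤ betaNumber μ (n + 1) q.castSucc :=
          (betaNumber_strictMono μ (n + 1)).monotone (Fin.succ_le_castSucc_iff.2 hpq)
        _ ≤ a q := (mem_Ico.1 (h_mem q)).1
    obtain ⟨ν, hν, rfl⟩ := exists_betaNumber_eq h_strictMono
    exact ⟨ν, ⟨(isHorizontalStrip_iff_betaNumber hμ hν).2 h_mem, hν⟩, rfl⟩

end HorizontalStrips

section BoundedTableaux

/-- The semistandard tableaux of shape `μ` with entries in `{0, …, n - 1}`. -/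
abbrev BoundedTableau (μ : YoungDiagram) (n : ℕ) : Type :=
  {T : SemistandardYoungTableau μ // ∀ ⦃i j : ℕ⦄, (i, j) ∈ μ → T i j < n}

variable {μ ν : YoungDiagram} {n : ℕ}

theorem row_le_entry (T : SemistandardYoungTableau μ) {i j : ℕ} (h : (i, j) ∈ μ) : i ≤ T i j := by
  induction i with
  | zero => exact Nat.zero_le _
  | succ i ih =>
    exact (ih (μ.up_left_mem i.le_succ le_rfl h)).trans_lt (T.col_strict i.lt_succ_self h)

instance : Finite (BoundedTableau μ n) := by
  let entries (T : BoundedTableau μ n) (c : μ.cells) : Fin n := ⟨T.1 c.1.1 c.1.2, T.2 c.2⟩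
  refine Finite.of_injective entries fun T S h => Subtype.ext (SemistandardYoungTableau.ext ?_)
  intro i j
  by_cases hij : (i, j) ∈ μ
  · exact congrArg Fin.val (congrFun h ⟨(i, j), hij⟩)
  · rw [T.1.zeros hij, S.1.zeros hij]

theorem isEmpty_boundedTableau (hμ : n < μ.colLen 0) : IsEmpty (BoundedTableau μ n) := by
  have h_mem : (n, 0) ∈ μ := YoungDiagram.mem_iff_lt_colLen.2 hμ
  exact ⟨fun T => (row_le_entry T.1 h_mem).not_gt (T.2 h_mem)⟩

/-- The diagram formed by the cells of `T` with entries less than `n`. -/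
def subdiagramLT (T : SemistandardYoungTableau μ) (n : ℕ) : YoungDiagram where
  cells := μ.cells.filter fun c => T c.1 c.2 < n
  isLowerSet := by
    rintro ⟨i, j⟩ ⟨i', j'⟩ ⟨hi, hj⟩ h
    simp only [coe_filter, YoungDiagram.mem_cells, Set.mem_ofPred_eq] at h ⊢
    have h_mem := μ.up_left_mem le_rfl hj h.1
    exact ⟨μ.up_left_mem hi hj h.1,
      ((T.col_weak hi h_mem).trans (T.row_weak_of_le hj h.1)).trans_lt h.2⟩

theorem mem_subdiagramLT {T : SemistandardYoungTableau μ} {i j : ℕ} :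
    (i, j) ∈ subdiagramLT T n ↔ (i, j) ∈ μ ∧ T i j < n := by
  rw [← YoungDiagram.mem_cells, subdiagramLT, mem_filter, YoungDiagram.mem_cells]

theorem subdiagramLT_mem_horizontalStrips (T : BoundedTableau μ (n + 1)) :
    subdiagramLT T.1 n ∈ horizontalStrips μ n := by
  refine ⟨⟨fun c hc => (mem_subdiagramLT.1 hc).1, fun i j h => ?_⟩, ?_⟩
  · exact mem_subdiagramLT.2 ⟨μ.up_left_mem i.le_succ le_rfl h,
      (T.1.col_strict i.lt_succ_self h).trans_le (Nat.lt_succ_iff.1 (T.2 h))⟩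
  · by_contra! h
    obtain ⟨h_mem, h_lt⟩ := mem_subdiagramLT.1 (YoungDiagram.mem_iff_lt_colLen.2 h)
    exact (row_le_entry T.1 h_mem).not_gt h_lt

/-- The restriction of a tableau to a smaller diagram. -/
def restrictTableau (T : SemistandardYoungTableau μ) (h : ν ≤ μ) : SemistandardYoungTableau ν where
  entry i j := if (i, j) ∈ ν then T i j else 0
  row_weak' hj hc := by
    rw [if_pos hc, if_pos (ν.up_left_mem le_rfl hj.le hc)]
    exact T.row_weak hj (h hc)
  col_strict' hi hc := by
    rw [if_pos hc, if_pos (ν.up_left_mem hi.le le_rfl hc)]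
    exact T.col_strict hi (h hc)
  zeros' hc := if_neg hc

/-- The extension of a tableau with entries less than `n` along a horizontal strip, all of whose
cells receive the entry `n`. -/
def extendTableau (S : BoundedTableau ν n) (h : IsHorizontalStrip ν μ) :
    SemistandardYoungTableau μ where
  entry i j := if (i, j) ∈ ν then S.1 i j else if (i, j) ∈ μ then n else 0
  row_weak' := by
    intro i j₁ j₂ hj hc
    rw [if_pos hc, if_pos (μ.up_left_mem le_rfl hj.le hc)]
    split_ifs with h₁ h₂ h₂
    · exact S.1.row_weak hj h₂
    · exact (S.2 h₁).le
    · exact absurd (ν.up_left_mem le_rfl hj.le h₂) h₁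
    · exact le_rfl
  col_strict' := by
    intro i₁ i₂ j hi hc
    have h₁ : (i₁, j) ∈ ν := h.2 (μ.up_left_mem hi le_rfl hc)
    rw [if_pos hc, if_pos h₁]
    split_ifs with h₂
    · exact S.1.col_strict hi h₂
    · exact S.2 h₁
  zeros' hc := by rw [if_neg fun hν => hc (h.1 hν), if_neg hc]

theorem restrictTableau_apply (T : SemistandardYoungTableau μ) (h : ν ≤ μ) (i j : ℕ) :
    restrictTableau T h i j = if (i, j) ∈ ν then T i j else 0 :=
  rfl

theorem extendTableau_apply (S : BoundedTableau ν n) (h : IsHorizontalStrip ν μ) (i j : ℕ) :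
    extendTableau S h i j = if (i, j) ∈ ν then S.1 i j else if (i, j) ∈ μ then n else 0 :=
  rfl

theorem extendTableau_lt_succ (S : BoundedTableau ν n) (h : IsHorizontalStrip ν μ) {i j : ℕ} :
    extendTableau S h i j < n + 1 := by
  rw [extendTableau_apply]
  split_ifs with hν
  · exact (S.2 hν).trans n.lt_succ_self
  · exact n.lt_succ_self
  · exact n.succ_pos

theorem subdiagramLT_extendTableau (S : BoundedTableau ν n) (h : IsHorizontalStrip ν μ) :
    subdiagramLT (extendTableau S h) n = ν := by
  ext ⟨i, j⟩
  rw [YoungDiagram.mem_cells, YoungDiagram.mem_cells, mem_subdiagramLT, extendTableau_apply]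
  constructor
  · rintro ⟨hμ, h_lt⟩
    by_contra hν
    simp [hν, hμ] at h_lt
  · intro hν
    rw [if_pos hν]
    exact ⟨h.1 hν, S.2 hν⟩

/-- Removing the entries equal to `n` identifies the tableaux whose entries less than `n` occupy `ν`
with the tableaux of shape `ν`. -/
def subdiagramLTFiberEquiv (h : IsHorizontalStrip ν μ) :
    {T : BoundedTableau μ (n + 1) // subdiagramLT T.1 n = ν} ≃ BoundedTableau ν n where
  toFun T := ⟨restrictTableau T.1.1 h.1, fun i j hν => by
    rw [restrictTableau_apply, if_pos hν]
    exact (mem_subdiagramLT.1 (T.2.symm ▸ hν)).2⟩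
  invFun S := ⟨⟨extendTableau S h, fun _ _ _ => extendTableau_lt_succ S h⟩,
    subdiagramLT_extendTableau S h⟩
  left_inv := by
    rintro ⟨T, rfl⟩
    refine Subtype.ext (Subtype.ext (SemistandardYoungTableau.ext fun i j => ?_))
    dsimp only
    simp only [extendTableau_apply, restrictTableau_apply]
    split_ifs with hν hμ
    · rfl
    · have h_lt := T.2 hμ
      rw [mem_subdiagramLT] at hν
      grind
    · exact (T.1.zeros hμ).symm
  right_inv S := by
    refine Subtype.ext (SemistandardYoungTableau.ext fun i j => ?_)
    simp only [extendTableau_apply, restrictTableau_apply]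
    split_ifs with hν
    · rfl
    · exact (S.1.zeros hν).symm

/-- The branching rule: a tableau with entries less than `n + 1` is determined by its part with
entries less than `n`, whose shape is obtained by removing a horizontal strip. -/
def branchingEquiv (μ : YoungDiagram) (n : ℕ) :
    BoundedTableau μ (n + 1) ≃ Σ ν : horizontalStrips μ n, BoundedTableau ν.1 n :=
  (Equiv.sigmaFiberEquiv fun T : BoundedTableau μ (n + 1) =>
    (⟨subdiagramLT T.1 n, subdiagramLT_mem_horizontalStrips T⟩ : horizontalStrips μ n)).symm.trans
  (Equiv.sigmaCongrRight fun ν =>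
    (Equiv.subtypeEquivRight fun _ => Subtype.ext_iff).trans (subdiagramLTFiberEquiv ν.2.1))

theorem card_boundedTableau_zero (hμ : μ.colLen 0 ≤ 0) : Nat.card (BoundedTableau μ 0) = 1 := by
  have h_not_mem (i j : ℕ) : (i, j) ∉ μ := by
    rw [YoungDiagram.mem_iff_lt_colLen]
    exact (colLen_le_of_colLen_zero_le hμ j).trans i.zero_le |>.not_gt
  refine Nat.card_eq_one_iff_exists.2
    ⟨⟨SemistandardYoungTableau.highestWeight μ, fun i j h => absurd h (h_not_mem i j)⟩, fun T => ?_⟩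
  refine Subtype.ext (SemistandardYoungTableau.ext fun i j => ?_)
  rw [T.1.zeros (h_not_mem i j), SemistandardYoungTableau.zeros _ (h_not_mem i j)]

theorem card_boundedTableau_eq_det (n : ℕ) : ∀ {μ : YoungDiagram}, μ.colLen 0 ≤ n →
    (Nat.card (BoundedTableau μ n) : ℚ) = (chooseMatrix ℚ (betaNumber μ n)).det := by
  induction n with
  | zero =>
    intro μ hμ
    rw [card_boundedTableau_zero hμ, Nat.cast_one, Matrix.det_isEmpty]
  | succ n ih =>
    intro μ hμ
    let shapes := (bijOn_betaNumber_horizontalStrips hμ).equiv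
    have : Fintype (horizontalStrips μ n) := Fintype.ofEquiv _ shapes.symm
    calc
      (Nat.card (BoundedTableau μ (n + 1)) : ℚ)
        = ∑ ν : horizontalStrips μ n, (Nat.card (BoundedTableau ν.1 n) : ℚ) := by
          rw [Nat.card_congr (branchingEquiv μ n), Nat.card_sigma, Nat.cast_sum]
      _ = ∑ ν : horizontalStrips μ n, (chooseMatrix ℚ (betaNumber ν.1 n)).det :=
          sum_congr rfl fun ν _ => ih ν.2.2
      _ = ∑ a ∈ Fintype.piFinset fun p : Fin n =>
            Ico (betaNumber μ (n + 1) p.castSucc) (betaNumber μ (n + 1) p.succ),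
          (chooseMatrix ℚ a).det :=
          (shapes.sum_comp fun a => (chooseMatrix ℚ a.1).det).trans
            (sum_coe_sort _ fun a => (chooseMatrix ℚ a).det)
      _ = (chooseMatrix ℚ (betaNumber μ (n + 1))).det :=
          (det_chooseMatrix_succ (betaNumber_strictMono μ (n + 1)).monotone).symm

theorem card_boundedTableau (μ : YoungDiagram) (n : ℕ) :
    (Nat.card (BoundedTableau μ n) : ℚ) =
      ∏ c ∈ μ.cells, ((n : ℚ) + c.2 - c.1) / hookLength μ c := by
  rcases le_or_gt (μ.colLen 0) n with hμ | hμ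
  · rw [card_boundedTableau_eq_det n hμ, det_chooseMatrix_betaNumber hμ]
  · have := isEmpty_boundedTableau hμ
    have h_mem : (n, 0) ∈ μ := YoungDiagram.mem_iff_lt_colLen.2 hμ
    rw [Nat.card_of_isEmpty, Nat.cast_zero, prod_eq_zero (YoungDiagram.mem_cells _ |>.2 h_mem)]
    simp

end BoundedTableaux

section Fillings

/-- The tableau with the given entries, from the semistandard conditions on adjacent cells. -/
def tableauOfAdjacent {μ : YoungDiagram} (entry : ℕ → ℕ → ℕ)
    (h_row : ∀ ⦃i j⦄, (i, j + 1) ∈ μ → entry i j ≤ entry i (j + 1))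
    (h_col : ∀ ⦃i j⦄, (i + 1, j) ∈ μ → entry i j < entry (i + 1) j)
    (h_zeros : ∀ ⦃i j⦄, (i, j) ∉ μ → entry i j = 0) : SemistandardYoungTableau μ where
  entry := entry
  row_weak' := by
    intro i j₁ j₂ hj
    induction hj with
    | refl => exact fun h => h_row h
    | step _ ih => exact fun h => (ih (μ.up_left_mem le_rfl (Nat.le_succ _) h)).trans (h_row h)
  col_strict' := by
    intro i₁ i₂ j hi
    induction hi with
    | refl => exact fun h => h_col h
    | step _ ih => exact fun h => (ih (μ.up_left_mem (Nat.le_succ _) le_rfl h)).trans (h_col h)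
  zeros' h := h_zeros h

variable {d m : ℕ} {lam : Fin d → ℕ}

/-- The fillings of the boxes of `lam` by `Fin m` that weakly increase from each box to its right
neighbour and strictly increase from each box to the one below it. -/
abbrev SemistandardFilling (lam : Fin d → ℕ) (m : ℕ) : Type :=
  {T : {p : Fin d × ℕ // p.2 < lam p.1} → Fin m //
    (∀ c c' : {p : Fin d × ℕ // p.2 < lam p.1},
      c.1.1 = c'.1.1 → c.1.2 + 1 = c'.1.2 → T c ≤ T c') ∧
    (∀ c c' : {p : Fin d × ℕ // p.2 < lam p.1},
      c.1.2 = c'.1.2 → (c.1.1 : ℕ) + 1 = (c'.1.1 : ℕ) → T c < T c')}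

/-- The entry of a filling in the cell `(i, j)`, extended by zero outside the diagram. -/
def fillingEntry (hlam : Antitone lam) (T : {p : Fin d × ℕ // p.2 < lam p.1} → Fin m) (i j : ℕ) :
    ℕ :=
  if h : (i, j) ∈ diagramOfAntitone lam hlam then
    T ⟨(⟨i, (mem_diagramOfAntitone.1 h).1⟩, j), (mem_diagramOfAntitone.1 h).2⟩
  else 0

variable {hlam : Antitone lam}

theorem fillingEntry_of_mem {T : {p : Fin d × ℕ // p.2 < lam p.1} → Fin m} {i j : ℕ}
    (h : (i, j) ∈ diagramOfAntitone lam hlam) : fillingEntry hlam T i j =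
      T ⟨(⟨i, (mem_diagramOfAntitone.1 h).1⟩, j), (mem_diagramOfAntitone.1 h).2⟩ :=
  dif_pos h

theorem coe_mem_diagramOfAntitone (c : {p : Fin d × ℕ // p.2 < lam p.1}) :
    ((c.1.1 : ℕ), c.1.2) ∈ diagramOfAntitone lam hlam :=
  mem_diagramOfAntitone.2 ⟨c.1.1.is_lt, c.2⟩

/-- The semistandard tableau with the entries of a filling. -/
def tableauOfFilling (hlam : Antitone lam) (T : SemistandardFilling lam m) :
    SemistandardYoungTableau (diagramOfAntitone lam hlam) :=
  tableauOfAdjacent (fillingEntry hlam T.1)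
    (fun i j h => by
      rw [fillingEntry_of_mem h,
        fillingEntry_of_mem (YoungDiagram.up_left_mem _ le_rfl j.le_succ h)]
      exact T.2.1 _ _ rfl rfl)
    (fun i j h => by
      rw [fillingEntry_of_mem h,
        fillingEntry_of_mem (YoungDiagram.up_left_mem _ i.le_succ le_rfl h)]
      exact T.2.2 _ _ rfl rfl)
    (fun _ _ h => dif_neg h)

/-- The filling with the entries of a semistandard tableau. -/
def fillingOfTableau (S : BoundedTableau (diagramOfAntitone lam hlam) m) :
    SemistandardFilling lam m where
  val c := ⟨S.1 c.1.1 c.1.2, S.2 (coe_mem_diagramOfAntitone c)⟩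
  property := by
    refine ⟨fun c c' h_row h_succ => ?_, fun c c' h_col h_succ => ?_⟩
    · simp only [Fin.mk_le_mk, h_row]
      exact S.1.row_weak (by omega) (coe_mem_diagramOfAntitone c')
    · simp only [Fin.mk_lt_mk, h_col]
      exact S.1.col_strict (by omega) (coe_mem_diagramOfAntitone c')

/-- Fillings of the boxes of `lam` are the same as tableaux on its diagram. -/
def semistandardFillingEquiv (hlam : Antitone lam) (m : ℕ) :
    SemistandardFilling lam m ≃ BoundedTableau (diagramOfAntitone lam hlam) m where
  toFun T := ⟨tableauOfFilling hlam T, fun _ _ h =>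
    (fillingEntry_of_mem h).trans_lt (Fin.is_lt _)⟩
  invFun := fillingOfTableau
  left_inv T := Subtype.ext <| funext fun c => Fin.ext <|
    fillingEntry_of_mem (coe_mem_diagramOfAntitone c)
  right_inv S := by
    refine Subtype.ext (SemistandardYoungTableau.ext fun i j => ?_)
    by_cases h : (i, j) ∈ diagramOfAntitone lam hlam
    · exact fillingEntry_of_mem h
    · rw [SemistandardYoungTableau.zeros _ h, SemistandardYoungTableau.zeros _ h]

end Fillings

/-- Hook content formula: the number of semistandard Young tableaux of shape `λ`
(a partition given by an antitone function `lam : Fin d → ℕ`) with entries in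
`{1,…,m}` equals `∏_{s∈λ} (m + c(s))/h(s)`, where for the box `s` in (0-indexed)
row `i` and column `j` the content is `c(s) = j - i` and the hook length is
`h(s) = λ_i + λ^t_j - i - j - 1` (0-indexed form of `λ_i + λ^t_j - i - j + 1`
with 1-indexing), `λ^t_j = #{i : λ_i > j}` being the transpose partition.
A tableau is a function from the cells of `λ` to `Fin m` which is weakly
increasing along rows and strictly increasing down columns. -/
theorem hook_content_formula (d m : ℕ) (lam : Fin d → ℕ) (hlam : Antitone lam) :
    (Nat.card {T : {p : Fin d × ℕ // p.2 < lam p.1} → Fin m //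
        (∀ c c' : {p : Fin d × ℕ // p.2 < lam p.1},
          c.1.1 = c'.1.1 → c.1.2 + 1 = c'.1.2 → T c ≤ T c') ∧
        (∀ c c' : {p : Fin d × ℕ // p.2 < lam p.1},
          c.1.2 = c'.1.2 → (c.1.1 : ℕ) + 1 = (c'.1.1 : ℕ) → T c < T c')} : ℚ) =
      ∏ i : Fin d, ∏ j ∈ Finset.range (lam i),
        ((m : ℚ) + (j : ℚ) - (i : ℚ)) /
          ((lam i + (Finset.univ.filter (fun i' : Fin d => j < lam i')).card
              - (i : ℕ) - j - 1 : ℕ) : ℚ) := by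
  rw [Nat.card_congr (semistandardFillingEquiv hlam m), card_boundedTableau,
    prod_cells_eq_prod_rows colLen_zero_diagramOfAntitone_le]
  simp only [hookLength, rowLen_diagramOfAntitone, colLen_diagramOfAntitone]
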